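/- Let (X, d) be a metric space, let B ⊆ X be a finite nonempty set with weight function w : B → [0,∞), and let Z ⊆ X be a finite nonempty set. Then there exists a nonempty subset C ⊆ B with |C| ≤ |Z| such that Σ_{b∈B} w(b)·d(b,C) ≤ 2·Σ_{b∈B} w(b)·d(b,Z). In other words, restricting the candidate centers to lie in B loses at most a factor of 2 in the k-median clustering cost of the weighted set (B, w). -/

import Mathlib

open Finset

/-- Distance from a point to a finite set of centers in a metric space:
`d(x,C) = min_{c ∈ C} d(x,c)`. -/
noncomputable def distToSet {X : Type*} [MetricSpace X] (x : X) (C : Finset X) : ℝ :=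
  sInf ((fun c => dist x c) '' C)

theorem distToSet_eq_infDist {X : Type*} [MetricSpace X] (x : X) (C : Finset X) :
    distToSet x C = Metric.infDist x C :=
  sInf_image'.trans Metric.infDist_eq_iInf.symm

section PseudoMetricSpace

variable {X : Type*} [PseudoMetricSpace X]

theorem infDist_image_le_two_mul_infDist {x : X} {Z : Set X} (hZ : Z.Nonempty) {f : X → X}
    (hf : ∀ z ∈ Z, dist z (f z) ≤ dist z x) :
    Metric.infDist x (f '' Z) ≤ 2 * Metric.infDist x Z := by
  rw [← div_le_iff₀' two_pos, Metric.le_infDist hZ]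
  intro z hz
  rw [div_le_iff₀' two_pos]
  calc Metric.infDist x (f '' Z) ≤ dist x (f z) :=
        Metric.infDist_le_dist_of_mem (Set.mem_image_of_mem f hz)
    _ ≤ dist x z + dist z (f z) := dist_triangle x z (f z)
    _ ≤ dist x z + dist z x := by gcongr; exact hf z hz
    _ = 2 * dist x z := by rw [dist_comm z x, two_mul]

theorem exists_finset_subset_forall_infDist_le_two_mul {K : Set X} (hK : IsCompact K)
    (hK_nonempty : K.Nonempty) {Z : Finset X} (hZ : Z.Nonempty) :
    ∃ C : Finset X, ↑C ⊆ K ∧ C.Nonempty ∧ C.card ≤ Z.card ∧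
      ∀ x ∈ K, Metric.infDist x C ≤ 2 * Metric.infDist x Z := by
  classical
  choose nearest nearest_mem infDist_eq using hK.exists_infDist_eq_dist hK_nonempty
  refine ⟨Z.image nearest, ?_, hZ.image nearest, card_image_le, fun x hx => ?_⟩
  · rw [coe_image]
    exact Set.image_subset_iff.2 fun z _ => nearest_mem z
  · rw [coe_image]
    exact infDist_image_le_two_mul_infDist hZ.to_set fun z _ =>
      (infDist_eq z).symm.trans_le (Metric.infDist_le_dist_of_mem hx)

theorem center_restriction_factor_two_general {K : Set X} (hK : IsCompact K)
    (hK_nonempty : K.Nonempty) {B : Finset X} (hBK : ↑B ⊆ K) {w : X → ℝ}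
    (hw : ∀ b ∈ B, 0 ≤ w b) {Z : Finset X} (hZ : Z.Nonempty) :
    ∃ C : Finset X, ↑C ⊆ K ∧ C.Nonempty ∧ C.card ≤ Z.card ∧
      ∑ b ∈ B, w b * Metric.infDist b C ≤ 2 * ∑ b ∈ B, w b * Metric.infDist b Z := by
  obtain ⟨C, hCK, hC, hcard, hdist⟩ :=
    exists_finset_subset_forall_infDist_le_two_mul hK hK_nonempty hZ
  refine ⟨C, hCK, hC, hcard, ?_⟩
  calc ∑ b ∈ B, w b * Metric.infDist b C
      ≤ ∑ b ∈ B, w b * (2 * Metric.infDist b Z) :=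
        sum_le_sum fun b hb => mul_le_mul_of_nonneg_left (hdist b (hBK hb)) (hw b hb)
    _ = 2 * ∑ b ∈ B, w b * Metric.infDist b Z := by
        simp only [mul_sum, mul_left_comm]

end PseudoMetricSpace

/-- Factor-2 center restriction: for a finite nonempty weighted set `(B, w)` in a metric
space and any finite nonempty center set `Z`, there is a nonempty `C ⊆ B` with
`|C| ≤ |Z|` whose clustering cost is at most twice that of `Z`. -/
theorem center_restriction_factor_two {X : Type*} [MetricSpace X]
    (B : Finset X) (hB : B.Nonempty) (w : X → ℝ) (hw : ∀ b ∈ B, 0 ≤ w b)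
    (Z : Finset X) (hZ : Z.Nonempty) :
    ∃ C : Finset X, C ⊆ B ∧ C.Nonempty ∧ C.card ≤ Z.card ∧
      ∑ b ∈ B, w b * distToSet b C ≤ 2 * ∑ b ∈ B, w b * distToSet b Z := by
  simpa only [distToSet_eq_infDist, coe_subset] using
    center_restriction_factor_two_general B.finite_toSet.isCompact hB.to_set subset_rfl hw hZ
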